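/- Let O be an order in an imaginary quadratic field, let N be a positive integer, let P ∈ O/NO be an element of additive order N, and let I_P = {x ∈ O : xP = 0}. Then there is a positive integer M dividing N such that the additive group of O/I_P is isomorphic to ℤ/Nℤ ⊕ ℤ/Mℤ. -/

import Mathlib

set_option synthInstance.maxHeartbeats 1000000
set_option maxHeartbeats 1000000

open NumberField

/-- `K` is an imaginary quadratic field: a number field of degree `2` over `ℚ`
with no real embedding. -/
def IsImagQuadratic (K : Type*) [Field K] [NumberField K] : Prop :=
  Module.finrank ℚ K = 2 ∧ IsEmpty (K →+* ℝ)

/-- `O = ℤ + f·𝓞_K` is the order of conductor `f` in the number field `K`,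
viewed as a subalgebra of `K`. -/
def IsOrderOfConductor (K : Type*) [Field K] [NumberField K] (f : ℕ)
    (O : Subalgebra ℤ K) : Prop :=
  ∀ x : K, x ∈ O ↔ ∃ (a : ℤ) (y : 𝓞 K), x = (a : K) + (f : K) * (algebraMap (𝓞 K) K y)

/-- The prime `ℓ` is *split* in the ring `R`: `R/ℓR ≅ ℤ/ℓ × ℤ/ℓ` as rings. -/
def SplitsIn (R : Type*) [CommRing R] (ℓ : ℕ) : Prop :=
  Nonempty ((R ⧸ Ideal.span {(ℓ : R)}) ≃+* ZMod ℓ × ZMod ℓ)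

/-- The prime `ℓ` is *inert* in the ring `R`: `R/ℓR` is a field. -/
def InertIn (R : Type*) [CommRing R] (ℓ : ℕ) : Prop :=
  IsField (R ⧸ Ideal.span {(ℓ : R)})

/-!
Put `S = O / I_P`. The characteristic of `S` is the additive order `N` of `P`, so `1 ∈ S` has
additive order `N`, and `N` kills `S`. Since `S` is generated by two elements as an abelian group,
`1 = d • v` where `v` belongs to a pair of generators `v`, `w`; as `d` is invertible in `S`, it is
prime to `N`, whence `v` is an integer multiple of `1` and `S` is generated by `1` and `w`. An
element of order `N` in an abelian group killed by `N` splits off as a direct summand, and a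
complement of `ℤ ∙ 1` is generated by a suitable translate of `w`.
-/

open Submodule

theorem exists_span_pair_eq_of_isCoprime {R V : Type*} [CommRing R] [AddCommGroup V] [Module R V]
    {a c : R} (hac : IsCoprime a c) (x y : V) :
    ∃ w : V, span R {a • x + c • y, w} = span R {x, y} := by
  obtain ⟨p, q, hpq⟩ := hac
  have hx : p • (a • x + c • y) + (-c) • (p • y - q • x) = x := by
    linear_combination (norm := module) hpq • x
  have hy : q • (a • x + c • y) + a • (p • y - q • x) = y := by
    linear_combination (norm := module) hpq • y
  refine ⟨p • y - q • x, le_antisymm ?_ ?_⟩ <;> rw [span_le, Set.pair_subset_iff]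
  · exact ⟨mem_span_pair.2 ⟨a, c, rfl⟩, mem_span_pair.2 ⟨-q, p, by module⟩⟩
  · exact ⟨mem_span_pair.2 ⟨p, -c, hx⟩, mem_span_pair.2 ⟨q, a, hy⟩⟩

theorem exists_smul_eq_and_span_pair_eq {R V : Type*} [CommRing R] [IsDomain R] [IsBezout R]
    [AddCommGroup V] [Module R V] {x y z : V} (hz : z ∈ span R {x, y}) :
    ∃ (d : R) (v w : V), d • v = z ∧ span R {v, w} = span R {x, y} := by
  classical
  let := IsBezout.toGCDDomain R
  obtain ⟨a, c, rfl⟩ := mem_span_pair.1 hz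
  obtain ⟨a', c', ha, hc, hunit⟩ := extract_gcd a c
  obtain ⟨w, hw⟩ := exists_span_pair_eq_of_isCoprime ((gcd_isUnit_iff a' c').1 hunit) x y
  refine ⟨gcd a c, a' • x + c' • y, w, ?_, hw⟩
  rw [smul_add, smul_smul, smul_smul, ← ha, ← hc]

theorem exists_span_pair_eq_top_of_finrank_le_two {R V : Type*} [Semiring R] [StrongRankCondition R]
    [AddCommMonoid V] [Module R V] [Module.Free R V] [Module.Finite R V]
    (hV : Module.finrank R V ≤ 2) : ∃ x y : V, span R {x, y} = ⊤ := by
  let b := Module.finBasis R V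
  let x (i : ℕ) : V := if hi : i < Module.finrank R V then b ⟨i, hi⟩ else 0
  have hb : Set.range b ⊆ {x 0, x 1} := by
    rintro _ ⟨i, rfl⟩
    have hxi : b i = x i := by simp [x]
    obtain hi | hi : (i : ℕ) = 0 ∨ (i : ℕ) = 1 := by omega
    all_goals simp [hxi, hi]
  exact ⟨x 0, x 1, top_le_iff.1 (b.span_eq ▸ span_mono hb)⟩

section AddCommGroup

variable {G : Type*} [AddCommGroup G] {g w : G}

theorem exists_mkQ_eq_and_addOrderOf_eq (hg : addOrderOf g ≠ 0) (hw : addOrderOf g • w = 0) :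
    ∃ w' : G, (ℤ ∙ g).mkQ w' = (ℤ ∙ g).mkQ w ∧ addOrderOf w' = addOrderOf ((ℤ ∙ g).mkQ w) := by
  set M := addOrderOf ((ℤ ∙ g).mkQ w) with hM
  obtain ⟨d, hd⟩ : M ∣ addOrderOf g :=
    addOrderOf_dvd_of_nsmul_eq_zero (by rw [← map_nsmul, hw, map_zero])
  have hd0 : (d : ℤ) ≠ 0 := Nat.cast_ne_zero.2 (right_ne_zero_of_mul (hd ▸ hg))
  obtain ⟨k, hk⟩ : ∃ k : ℤ, k • g = M • w := by
    rw [← mem_span_singleton, ← Quotient.mk_eq_zero, ← mkQ_apply, map_nsmul,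
      addOrderOf_nsmul_eq_zero]
  obtain ⟨k', rfl⟩ : (M : ℤ) ∣ k := by
    have hdk : ((d : ℤ) * k) • g = 0 := by
      rw [mul_smul, hk, natCast_zsmul, ← mul_nsmul, ← hd, hw]
    rw [← addOrderOf_dvd_iff_zsmul_eq_zero, hd, Nat.cast_mul, mul_comm] at hdk
    exact (mul_dvd_mul_iff_left hd0).1 hdk
  have hmk : (ℤ ∙ g).mkQ (w - k' • g) = (ℤ ∙ g).mkQ w := by
    rw [mkQ_apply, mkQ_apply, Submodule.Quotient.eq, sub_sub_cancel_left, neg_mem_iff]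
    exact smul_mem _ k' (mem_span_singleton_self g)
  refine ⟨w - k' • g, hmk, Nat.dvd_antisymm ?_ ?_⟩
  · apply addOrderOf_dvd_of_nsmul_eq_zero
    rw [nsmul_sub, ← hk, mul_smul, natCast_zsmul, sub_self]
  · rw [hM, ← hmk]
    exact addOrderOf_map_dvd (ℤ ∙ g).mkQ.toAddMonoidHom _

theorem disjoint_span_int_singleton_of_addOrderOf_mkQ_eq
    (hw : addOrderOf w = addOrderOf ((ℤ ∙ g).mkQ w)) : Disjoint (ℤ ∙ g) (ℤ ∙ w) := by
  rw [disjoint_def]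
  intro z hzg hzw
  obtain ⟨b, rfl⟩ := mem_span_singleton.1 hzw
  rwa [← addOrderOf_dvd_iff_zsmul_eq_zero, hw, addOrderOf_dvd_iff_zsmul_eq_zero, ← map_zsmul,
    mkQ_apply, Quotient.mk_eq_zero]

theorem nonempty_zmod_addEquiv_span_int_singleton (g : G) :
    Nonempty (ZMod (addOrderOf g) ≃+ (ℤ ∙ g)) := by
  rw [← Nat.card_zmultiples, ← span_singleton_toAddSubgroup_eq_zmultiples]
  have : IsAddCyclic (ℤ ∙ g) := by
    refine ⟨⟨g, mem_span_singleton_self g⟩, fun ⟨z, hz⟩ ↦ ?_⟩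
    obtain ⟨k, rfl⟩ := mem_span_singleton.1 hz
    exact ⟨k, rfl⟩
  exact ⟨zmodAddCyclicAddEquiv this⟩

theorem nonempty_addEquiv_zmod_prod_of_isCompl (h : IsCompl (ℤ ∙ g) (ℤ ∙ w)) :
    Nonempty (G ≃+ ZMod (addOrderOf g) × ZMod (addOrderOf w)) := by
  obtain ⟨eg⟩ := nonempty_zmod_addEquiv_span_int_singleton g
  obtain ⟨ew⟩ := nonempty_zmod_addEquiv_span_int_singleton w
  exact ⟨((eg.prodCongr ew).trans (prodEquivOfIsCompl _ _ h).toAddEquiv).symm⟩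

theorem exists_addEquiv_zmod_prod_of_span_pair_eq_top (hg : addOrderOf g ≠ 0)
    (hw : addOrderOf g • w = 0) (hgw : span ℤ {g, w} = ⊤) :
    ∃ M : ℕ, M ∣ addOrderOf g ∧ Nonempty (G ≃+ ZMod (addOrderOf g) × ZMod M) := by
  obtain ⟨w', hmk, hord⟩ := exists_mkQ_eq_and_addOrderOf_eq hg hw
  have hsup : (ℤ ∙ g) ⊔ (ℤ ∙ w') = ⊤ := by
    rw [← comap_map_mkQ, map_span, Set.image_singleton, hmk, ← Set.image_singleton, ← map_span,
      comap_map_mkQ, ← span_insert, hgw]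
  have hdvd : addOrderOf w' ∣ addOrderOf g := by
    rw [hord]
    exact (addOrderOf_map_dvd (ℤ ∙ g).mkQ.toAddMonoidHom w).trans
      (addOrderOf_dvd_of_nsmul_eq_zero hw)
  have hcompl : IsCompl (ℤ ∙ g) (ℤ ∙ w') :=
    ⟨disjoint_span_int_singleton_of_addOrderOf_mkQ_eq (hmk ▸ hord), codisjoint_iff.2 hsup⟩
  exact ⟨addOrderOf w', hdvd, nonempty_addEquiv_zmod_prod_of_isCompl hcompl⟩

end AddCommGroup

section CharP

variable {S : Type*} [Ring S] {N : ℕ} [CharP S N]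

theorem isCoprime_natCast_of_isUnit_intCast (hN : N ≠ 0) {d : ℤ} (hd : IsUnit (d : S)) :
    IsCoprime d N := by
  obtain ⟨n, hn⟩ : (Int.gcd d N : ℤ) ∣ N := Int.gcd_dvd_right ..
  obtain ⟨e, he⟩ : (Int.gcd d N : ℤ) ∣ d := Int.gcd_dvd_left ..
  have hnd : (d : S) * (n : S) = 0 := by
    rw [← Int.cast_mul, CharP.intCast_eq_zero_iff S N]
    exact ⟨e, by linear_combination n * he - e * hn⟩
  have hNn : (N : ℤ) ∣ n := by
    rw [← CharP.intCast_eq_zero_iff S N]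
    exact hd.mul_right_eq_zero.1 hnd
  have hn0 : n ≠ 0 := right_ne_zero_of_mul (hn ▸ Nat.cast_ne_zero.2 hN)
  rw [Int.isCoprime_iff_gcd_eq_one, ← Nat.dvd_one, ← Int.natCast_dvd_natCast,
    ← mul_dvd_mul_iff_right hn0, ← hn, Nat.cast_one, one_mul]
  exact hNn

theorem exists_span_one_pair_eq_top_of_charP (hN : N ≠ 0) {x y : S}
    (hxy : span ℤ {x, y} = ⊤) : ∃ w : S, span ℤ {1, w} = ⊤ := by
  obtain ⟨d, v, w, hdv, hvw⟩ :=
    exists_smul_eq_and_span_pair_eq (hxy ▸ mem_top : (1 : S) ∈ span ℤ {x, y})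
  have hd : IsUnit (d : S) := by
    rw [zsmul_eq_mul] at hdv
    exact ⟨⟨d, v, hdv, (Int.cast_commute d v).eq ▸ hdv⟩, rfl⟩
  obtain ⟨p, q, hpq⟩ := isCoprime_natCast_of_isUnit_intCast hN hd
  have hNv : (N : ℤ) • v = 0 := by
    rw [natCast_zsmul, nsmul_eq_mul, CharP.cast_eq_zero, zero_mul]
  have hv : p • (1 : S) = v := by
    calc p • (1 : S) = (p * d + q * N) • v := by
          rw [add_smul, mul_smul, hdv, mul_smul, hNv, smul_zero, add_zero]
      _ = v := by rw [hpq, one_smul]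
  refine ⟨w, top_le_iff.1 ?_⟩
  rw [← hxy, ← hvw, span_le, Set.pair_subset_iff]
  exact ⟨mem_span_pair.2 ⟨p, 0, by simpa using hv⟩, subset_span (by simp)⟩

theorem exists_addEquiv_zmod_prod_of_charP (hN : N ≠ 0) {x y : S} (hxy : span ℤ {x, y} = ⊤) :
    ∃ M : ℕ, M ∣ N ∧ Nonempty (S ≃+ ZMod N × ZMod M) := by
  obtain ⟨w, hw⟩ := exists_span_one_pair_eq_top_of_charP hN hxy
  obtain rfl : addOrderOf (1 : S) = N := CharP.eq S (CharP.addOrderOf_one S) inferInstance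
  exact exists_addEquiv_zmod_prod_of_span_pair_eq_top hN (by simp [nsmul_eq_mul]) hw

end CharP

theorem charP_quotient_torsionOf {R V : Type*} [CommRing R] [AddCommGroup V] [Module R V] (P : V) :
    CharP (R ⧸ Ideal.torsionOf R V P) (addOrderOf P) where
  cast_eq_zero_iff n := by
    rw [← map_natCast (Ideal.Quotient.mk _), Ideal.Quotient.eq_zero_iff_mem,
      Ideal.mem_torsionOf_iff, Nat.cast_smul_eq_nsmul, addOrderOf_dvd_iff_nsmul_eq_zero]

theorem annihilator_quotient_structure_general {R V : Type*} [CommRing R] [AddCommGroup V]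
    [Module R V] {x y : R} (hxy : span ℤ {x, y} = ⊤) {N : ℕ} (hN : 0 < N) {P : V}
    (hP : addOrderOf P = N) :
    ∃ M : ℕ, 0 < M ∧ M ∣ N ∧ Nonempty ((R ⧸ Ideal.torsionOf R V P) ≃+ ZMod N × ZMod M) := by
  subst hP
  have := charP_quotient_torsionOf (R := R) P
  let π : R →ₗ[ℤ] R ⧸ Ideal.torsionOf R V P :=
    (Ideal.Quotient.mk (Ideal.torsionOf R V P)).toAddMonoidHom.toIntLinearMap
  have hspan : span ℤ {π x, π y} = ⊤ := by
    rw [← Set.image_pair, ← map_span, hxy, Submodule.map_top, LinearMap.range_eq_top]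
    exact Ideal.Quotient.mk_surjective
  obtain ⟨M, hMN, e⟩ := exists_addEquiv_zmod_prod_of_charP hN.ne' hspan
  exact ⟨M, Nat.pos_of_dvd_of_pos hMN hN, hMN, e⟩

section NumberField

variable {K : Type*} [Field K] [NumberField K]

theorem exists_span_int_pair_eq_top_of_le_integralClosure (hK : Module.finrank ℚ K ≤ 2)
    {O : Subalgebra ℤ K} (hO : O ≤ integralClosure ℤ K) :
    ∃ x y : O, span ℤ {x, y} = ⊤ := by
  let ι : O →ₗ[ℤ] 𝓞 K := (Subalgebra.inclusion hO).toLinearMap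
  have hι : Function.Injective ι := Subalgebra.inclusion_injective hO
  have : Module.Finite ℤ O := Module.Finite.of_injective ι hι
  apply exists_span_pair_eq_top_of_finrank_le_two
  calc Module.finrank ℤ O ≤ Module.finrank ℤ (𝓞 K) := LinearMap.finrank_le_finrank_of_injective hι
    _ = Module.finrank ℚ K := RingOfIntegers.rank K
    _ ≤ 2 := hK

theorem IsOrderOfConductor.le_integralClosure {f : ℕ} {O : Subalgebra ℤ K}
    (hO : IsOrderOfConductor K f O) : O ≤ integralClosure ℤ K := by
  intro x hx
  obtain ⟨a, y, rfl⟩ := (hO x).1 hx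
  exact add_mem (intCast_mem _ a) (mul_mem (natCast_mem _ f) y.2)

end NumberField

/-- Let `O` be an order in an imaginary quadratic field, `N ≥ 1`,
`P ∈ O/NO` of additive order `N`, and `I_P = ann(P)`.  Then there is a positive divisor
`M` of `N` with `O/I_P ≅ ℤ/N ⊕ ℤ/M` as additive groups. -/
theorem annihilator_quotient_structure (K : Type*) [Field K] [NumberField K]
    (hK : IsImagQuadratic K) (f : ℕ) (hf : 0 < f)
    (O : Subalgebra ℤ K) (hO : IsOrderOfConductor K f O) (N : ℕ) (hN : 0 < N)
    (P : ↥O ⧸ Ideal.span {(N : ↥O)}) (hP : addOrderOf P = N)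
    (IP : Ideal ↥O) (hIP : ∀ x : ↥O, x ∈ IP ↔ x • P = 0) :
    ∃ M : ℕ, 0 < M ∧ M ∣ N ∧ Nonempty ((↥O ⧸ IP) ≃+ ZMod N × ZMod M) := by
  obtain ⟨x, y, hxy⟩ :=
    exists_span_int_pair_eq_top_of_le_integralClosure hK.1.le hO.le_integralClosure
  obtain rfl : IP = Ideal.torsionOf O _ P := Ideal.ext hIP
  exact annihilator_quotient_structure_general hxy hN hP
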